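/- arXiv:2012.06941 — 3 statements merged into one kernel-verified Lean document; each statement's English description precedes it below -/
import Mathlib

section
/- Let H = ℓ²(ℤ, ℂ) with standard orthonormal basis (e_k)_{k∈ℤ}, let P : H → H be the bounded operator with (P f)(k) = f(k) if k > 0 and 0 otherwise, and for m ∈ ℤ let S^m : H → H be the bilateral shift determined by S^m e_k = e_{k+m}. Then the range of the commutator P∘S^m − S^m∘P is a finite-dimensional subspace of dimension exactly |m|. -/
/-!
The operator `S` acts on coordinates by `(S f) k = f (k - m)`: both sides are continuous in `f` and
agree on the basis vectors. Hence the commutator acts by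
`((P S - S P) f) k = (1_{k > 0} - 1_{k - m > 0}) f (k - m)`. The scalar factor is `±1` for `k` in the
half-open interval between `0` and `m`, namely `Ioc (min 0 m) (max 0 m)`, and vanishes elsewhere.
So the range is the span of the `e k` with `k` in this interval of `|m|` integers, and these
vectors are linearly independent.
-/

open scoped InnerProductSpace

/-- The Hilbert space `H = ℓ²(ℤ, ℂ)`. -/
noncomputable abbrev H : Type := lp (fun _ : ℤ => ℂ) 2

/-- The standard orthonormal basis vector `e k` of `ℓ²(ℤ, ℂ)`. -/
noncomputable def e (k : ℤ) : H := lp.single 2 k (1 : ℂ)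

/-- A bounded operator has finite rank iff its range is a finite-dimensional subspace. -/
def FiniteRank (T : H →L[ℂ] H) : Prop :=
  FiniteDimensional ℂ (LinearMap.range (T : H →ₗ[ℂ] H))

lemma e_apply (j k : ℤ) : (e j : H) k = if k = j then 1 else 0 := by
  rw [e, lp.single_apply, Pi.single_apply]

/-- A bounded operator shifting the basis vectors shifts the coordinates of every vector. -/
lemma shift_apply (m : ℤ) (S : H →L[ℂ] H) (hS : ∀ k : ℤ, S (e k) = e (k + m)) (f : H) (k : ℤ) :
    S f k = f (k - m) := by
  have h1 : HasSum (fun i : ℤ => lp.single 2 i (f i)) f := lp.hasSum_single (by simp) f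
  have h2 := (lp.evalCLM ℂ (fun _ : ℤ => ℂ) 2 k ∘L S).hasSum h1
  have h3 : ∀ i : ℤ, (lp.evalCLM ℂ (fun _ : ℤ => ℂ) 2 k ∘L S) (lp.single 2 i (f i))
      = if i = k - m then f (k - m) else 0 := by
    intro i
    have h4 : (lp.single 2 i (f i) : H) = f i • e i := by
      rw [e, ← lp.single_smul]; simp
    rw [h4, map_smul, ContinuousLinearMap.comp_apply, hS]
    change f i • (e (i + m) : H) k = _
    rw [e_apply]
    by_cases h : i = k - m
    · subst h; simp
    · have : k ≠ i + m := by omega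
      simp [h, this]
  have h5 : HasSum (fun i : ℤ => if i = k - m then f (k - m) else 0) (S f k) := by
    simp only [h3] at h2
    exact h2
  exact h5.unique (hasSum_ite_eq (k - m) (f (k - m)))

lemma linearIndependent_e (J : Finset ℤ) : LinearIndependent ℂ (fun j : J => e j) := by
  rw [Fintype.linearIndependent_iff]
  intro g hg i
  have h := congrArg (fun f : H => f (i : ℤ)) hg
  dsimp only at h
  rw [lp.coeFn_sum, Finset.sum_apply] at h
  simpa only [lp.coeFn_smul, Pi.smul_apply, e_apply, smul_eq_mul, mul_ite, mul_one, mul_zero,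
    Subtype.coe_inj, Finset.sum_ite_eq, Finset.mem_univ, if_true, lp.coeFn_zero,
    Pi.zero_apply] using h

/-- The commutator of the Hardy projection `P` with the bilateral shift `S^m`
has finite-dimensional range of dimension exactly `|m|`. -/
theorem shift_commutator_rank_eq (m : ℤ) (P S : H →L[ℂ] H)
    (hP : ∀ (f : H) (k : ℤ), P f k = if 0 < k then f k else 0)
    (hS : ∀ k : ℤ, S (e k) = e (k + m)) :
    FiniteDimensional ℂ (LinearMap.range ((P ∘L S - S ∘L P) : H →ₗ[ℂ] H)) ∧
      Module.finrank ℂ (LinearMap.range ((P ∘L S - S ∘L P) : H →ₗ[ℂ] H))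
        = m.natAbs := by
  set T : H →ₗ[ℂ] H := ((P ∘L S - S ∘L P) : H →ₗ[ℂ] H) with hT
  set J : Finset ℤ := Finset.Ioc (min 0 m) (max 0 m) with hJ
  have hTf : ∀ (f : H) (k : ℤ), T f k
      = ((if 0 < k then 1 else 0) - (if 0 < k - m then 1 else 0)) * f (k - m) := by
    intro f k
    change P (S f) k - S (P f) k = _
    rw [hP, shift_apply m S hS, shift_apply m S hS, hP]
    split_ifs <;> simp
  have hrange : LinearMap.range T = Submodule.span ℂ (Set.range (fun j : J => e j)) := by
    apply le_antisymm
    · rintro _ ⟨f, rfl⟩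
      have h : T f = ∑ j : J, (T f j) • e j := by
        ext k
        rw [lp.coeFn_sum, Finset.sum_apply,
          Finset.sum_coe_sort J (fun j => ((T f j) • e j : H) k)]
        simp only [lp.coeFn_smul, Pi.smul_apply, e_apply, smul_eq_mul, mul_ite, mul_one, mul_zero,
          Finset.sum_ite_eq]
        split_ifs with hk
        · rfl
        · rw [hTf]
          rw [hJ, Finset.mem_Ioc] at hk
          by_cases h0 : 0 < k <;> by_cases h1 : m < k <;> simp [h0, h1] <;> omega
      rw [h]
      exact Submodule.sum_mem _ fun j _ =>
        Submodule.smul_mem _ _ (Submodule.subset_span ⟨j, rfl⟩)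
    · rw [Submodule.span_le]
      rintro _ ⟨⟨j, hj⟩, rfl⟩
      rw [hJ, Finset.mem_Ioc] at hj
      -- The scalar factor is its own inverse on `J`, where it equals `1` or `-1`.
      refine ⟨((if 0 < j then 1 else 0) - (if 0 < j - m then 1 else 0) : ℂ) • e (j - m), ?_⟩
      ext k
      rw [hTf, lp.coeFn_smul, Pi.smul_apply, e_apply, e_apply]
      by_cases hk : k = j
      · subst hk
        by_cases h0 : 0 < k <;> by_cases h1 : m < k <;> simp [h0, h1] <;> omega
      · simp [hk]
  rw [hrange]
  refine ⟨FiniteDimensional.span_of_finite ℂ (Set.finite_range _), ?_⟩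
  rw [finrank_span_eq_card (linearIndependent_e J), Fintype.card_coe, hJ, Int.card_Ioc]
  omega
end

section
/- Let H = ℓ²(ℤ, ℂ) with standard orthonormal basis (e_k)_{k∈ℤ}, P the projection with (P f)(k) = f(k) for k > 0 and 0 otherwise, and S^m the bilateral shift S^m e_k = e_{k+m}. For all m, n, k ∈ ℤ, the operator Ω(S^m, S^n) := (S^m∘P)∘(S^n∘P) − (S^n∘P)∘(S^m∘P) satisfies Ω(S^m, S^n) e_k = c • e_{k+m+n}, where c = (if 0 < k and 0 < n + k then (1:ℂ) else 0) − (if 0 < k and 0 < m + k then (1:ℂ) else 0). -/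
/-!
Since `P` fixes `e k` for `0 < k` and kills it otherwise (`proj_basis`), the product
`S^m P S^n P` sends `e k` to `e (k + m + n)` when both `k` and `k + n` are positive, and to `0`
otherwise. Exchanging `m` and `n` and subtracting gives the two indicators in the coefficient.
-/

open scoped InnerProductSpace

theorem proj_basis (P : H →L[ℂ] H)
    (hP : ∀ (f : H) (k : ℤ), P f k = if 0 < k then f k else 0) (k : ℤ) :
    P (e k) = if 0 < k then e k else 0 := by
  ext j
  rw [hP]
  by_cases hjk : j = k
  · subst hjk
    split_ifs <;> simp
  · have h0 : (e k : H) j = 0 := by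
      simp [e, hjk]
    split_ifs <;> simp [h0]

/-- Explicit evaluation of the curvature `Ω(S^m, S^n) = [S^m∘P, S^n∘P]` on the
basis vectors: `Ω(S^m, S^n) e_k = c • e_{k+m+n}` with
`c = [0 < k ∧ 0 < n+k] − [0 < k ∧ 0 < m+k]`. -/
theorem omega_shift_apply (m n : ℤ) (P Sm Sn : H →L[ℂ] H)
    (hP : ∀ (f : H) (k : ℤ), P f k = if 0 < k then f k else 0)
    (hSm : ∀ k : ℤ, Sm (e k) = e (k + m))
    (hSn : ∀ k : ℤ, Sn (e k) = e (k + n)) (k : ℤ) :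
    ((Sm ∘L P) ∘L (Sn ∘L P) - (Sn ∘L P) ∘L (Sm ∘L P)) (e k)
      = ((if 0 < k ∧ 0 < n + k then (1 : ℂ) else 0)
          - (if 0 < k ∧ 0 < m + k then (1 : ℂ) else 0)) • e (k + m + n) := by
  have comm : k + n + m = k + m + n := by ring
  simp only [sub_apply, ContinuousLinearMap.comp_apply,
    proj_basis P hP, add_comm n k, add_comm m k]
  by_cases hk : 0 < k <;> by_cases hn : 0 < k + n <;> by_cases hm : 0 < k + m <;>
    simp [hk, hn, hm, hSm, hSn, proj_basis P hP, comm]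
end

section
/- Let H = ℓ²(ℤ, ℂ) with standard orthonormal basis (e_k)_{k∈ℤ} and P the projection with (P f)(k) = f(k) for k > 0 and 0 otherwise. Let a, b, c be bounded operators on H such that P∘a − a∘P, P∘b − b∘P and P∘c − c∘P all have finite rank. Define c_Ω(x,y) := ∑'_{k∈ℤ} ⟨Ω(x,y) e_k, e_k⟩ where Ω(x,y) := (x∘P)∘(y∘P) − (y∘P)∘(x∘P) − (x∘y − y∘x)∘P. Then the Lie-algebra 2-cocycle identity holds: c_Ω(⁅a,b⁆, c) + c_Ω(⁅b,c⁆, a) + c_Ω(⁅c,a⁆, b) = 0, where ⁅x,y⁆ = x∘y − y∘x. -/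
/-!
Write `θ_x = x ∘ P`, so that `Ω(x,y) = [θ_x, θ_y] - θ_[x,y]`. The Jacobi identity, used once for
`θ_a, θ_b, θ_c` and once for `a, b, c`, gives the Bianchi identity
`Ω([a,b],c) + Ω([b,c],a) + Ω([c,a],b) = [θ_c, Ω(a,b)] + [θ_a, Ω(b,c)] + [θ_b, Ω(c,a)]`
(`omega_bianchi`).

As `P² = P`, one has `Ω(x,y) = x ∘ [P,y] ∘ P - y ∘ [P,x] ∘ P`, which has finite rank whenever
`[P,x]` and `[P,y]` do (`finiteRank_omega`); the `x` with `[P,x]` of finite rank are closed under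
commutators because `[P,·]` is a derivation. So every diagonal sum involved converges, and it
remains to see that the commutator of a finite-rank `T` with a bounded `S` has trace zero
(`exists_hasSum_diag`). For this `T` is written as a finite sum of operators
`x ↦ ⟪v, x⟫ u`, and both `S ∘ T` and `T ∘ S` have trace `∑ ⟪v, S u⟫ = ∑ ⟪S† v, u⟫`, by Parseval.
-/

open scoped InnerProductSpace

/-- The curvature `Ω(x,y) = θ_x∘θ_y − θ_y∘θ_x − θ_{[x,y]}` of the connection
`θ_x = x∘P`. -/
noncomputable def Omega (P x y : H →L[ℂ] H) : H →L[ℂ] H :=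
  (x ∘L P) ∘L (y ∘L P) - (y ∘L P) ∘L (x ∘L P) - (x ∘L y - y ∘L x) ∘L P

/-- The 2-cochain `c_Ω(x,y) = tr Ω(x,y)`, the sum of the diagonal entries of the
finite-rank operator `Ω(x,y)` in the standard orthonormal basis. -/
noncomputable def cOmega (P x y : H →L[ℂ] H) : ℂ :=
  ∑' k : ℤ, ⟪Omega P x y (e k), e k⟫_ℂ

lemma FiniteRank.comp_left {T : H →L[ℂ] H} (hT : FiniteRank T) (S : H →L[ℂ] H) :
    FiniteRank (S * T) := by
  unfold FiniteRank at *
  have h : LinearMap.range ((S * T : H →L[ℂ] H) : H →ₗ[ℂ] H)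
      = (LinearMap.range (T : H →ₗ[ℂ] H)).map (S : H →ₗ[ℂ] H) :=
    LinearMap.range_comp (T : H →ₗ[ℂ] H) (S : H →ₗ[ℂ] H)
  rw [h]
  infer_instance

lemma FiniteRank.comp_right {T : H →L[ℂ] H} (hT : FiniteRank T) (S : H →L[ℂ] H) :
    FiniteRank (T * S) := by
  unfold FiniteRank at *
  exact Submodule.finiteDimensional_of_le
    (LinearMap.range_comp_le_range (S : H →ₗ[ℂ] H) (T : H →ₗ[ℂ] H))

lemma FiniteRank.sub {S T : H →L[ℂ] H} (hS : FiniteRank S) (hT : FiniteRank T) :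
    FiniteRank (S - T) := by
  unfold FiniteRank at *
  refine Submodule.finiteDimensional_of_le
    (S₂ := LinearMap.range (S : H →ₗ[ℂ] H) ⊔ LinearMap.range (T : H →ₗ[ℂ] H)) ?_
  rintro _ ⟨x, rfl⟩
  exact Submodule.sub_mem _ (Submodule.mem_sup_left ⟨x, rfl⟩) (Submodule.mem_sup_right ⟨x, rfl⟩)

lemma FiniteRank.add {S T : H →L[ℂ] H} (hS : FiniteRank S) (hT : FiniteRank T) :
    FiniteRank (S + T) := by
  unfold FiniteRank at *
  refine Submodule.finiteDimensional_of_le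
    (S₂ := LinearMap.range (S : H →ₗ[ℂ] H) ⊔ LinearMap.range (T : H →ₗ[ℂ] H)) ?_
  rintro _ ⟨x, rfl⟩
  exact Submodule.add_mem _ (Submodule.mem_sup_left ⟨x, rfl⟩) (Submodule.mem_sup_right ⟨x, rfl⟩)

/-- A finite-rank operator is a finite sum of rank-one operators `x ↦ ⟪v, x⟫ u`: take for `u` an
orthonormal basis of the range and for `v` its image under the adjoint. -/
lemma FiniteRank.exists_sum {T : H →L[ℂ] H} (hT : FiniteRank T) :
    ∃ (n : ℕ) (u v : Fin n → H), ∀ x, T x = ∑ i, ⟪v i, x⟫_ℂ • u i := by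
  unfold FiniteRank at hT
  let b := stdOrthonormalBasis ℂ (LinearMap.range (T : H →ₗ[ℂ] H))
  refine ⟨_, fun i => (b i : H), fun i => ContinuousLinearMap.adjoint T (b i : H), fun x => ?_⟩
  have h := congrArg (Subtype.val) (b.sum_repr' ⟨T x, ⟨x, rfl⟩⟩)
  simp only [Submodule.coe_sum, Submodule.coe_smul, Submodule.coe_inner] at h
  simp only [ContinuousLinearMap.adjoint_inner_left]
  exact h.symm

/-- Parseval's identity in the basis `e k`, read as the trace of the rank-one operator
`x ↦ ⟪v, x⟫ u`; the result is conjugated because the operator is in the first slot. -/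
lemma hasSum_diag_rankOne (u v : H) :
    HasSum (fun k : ℤ => ⟪⟪v, e k⟫_ℂ • u, e k⟫_ℂ) ⟪u, v⟫_ℂ := by
  have h : (fun k : ℤ => ⟪⟪v, e k⟫_ℂ • u, e k⟫_ℂ) = fun k => ⟪u k, v k⟫_ℂ := by
    funext k
    rw [inner_smul_left]
    simp only [e, lp.inner_single_right, inner_conj_symm]
    simp [mul_comm]
  rw [h]
  exact lp.hasSum_inner u v

/-- For `T` of finite rank and `S` bounded, `S ∘ T` and `T ∘ S` have convergent diagonal sums with
the same value. -/
lemma exists_hasSum_diag {T : H →L[ℂ] H} (hT : FiniteRank T) (S : H →L[ℂ] H) :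
    ∃ t : ℂ, HasSum (fun k : ℤ => ⟪(S * T) (e k), e k⟫_ℂ) t ∧
      HasSum (fun k : ℤ => ⟪(T * S) (e k), e k⟫_ℂ) t := by
  obtain ⟨n, u, v, h⟩ := hT.exists_sum
  refine ⟨∑ i, ⟪S (u i), v i⟫_ℂ, ?_, ?_⟩
  · have := hasSum_sum (s := Finset.univ) fun i _ => hasSum_diag_rankOne (S (u i)) (v i)
    simpa only [mul_apply_eq_comp, h, map_sum, map_smul, sum_inner] using this
  · have := hasSum_sum (s := Finset.univ) fun i _ =>
      hasSum_diag_rankOne (u i) (ContinuousLinearMap.adjoint S (v i))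
    simpa only [mul_apply_eq_comp, h, sum_inner,
      ContinuousLinearMap.adjoint_inner_left, ContinuousLinearMap.adjoint_inner_right] using this

lemma omega_eq_mul (P x y : H →L[ℂ] H) :
    Omega P x y = x * P * (y * P) - y * P * (x * P) - (x * y - y * x) * P := rfl

lemma finiteRank_omega {P x y : H →L[ℂ] H} (hPP : P * P = P)
    (hx : FiniteRank (P * x - x * P)) (hy : FiniteRank (P * y - y * P)) :
    FiniteRank (Omega P x y) := by
  have h : Omega P x y = x * ((P * y - y * P) * P) - y * ((P * x - x * P) * P) := by
    simp only [omega_eq_mul, mul_sub, sub_mul, mul_assoc, hPP]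
    abel
  rw [h]
  exact ((hy.comp_right P).comp_left x).sub ((hx.comp_right P).comp_left y)

lemma finiteRank_commutator {P x y : H →L[ℂ] H}
    (hx : FiniteRank (P * x - x * P)) (hy : FiniteRank (P * y - y * P)) :
    FiniteRank (P * (x * y - y * x) - (x * y - y * x) * P) := by
  have h : P * (x * y - y * x) - (x * y - y * x) * P
      = ((P * x - x * P) * y + x * (P * y - y * P))
        - ((P * y - y * P) * x + y * (P * x - x * P)) := by
    noncomm_ring
  rw [h]
  exact ((hx.comp_right y).add (hy.comp_left x)).sub ((hy.comp_right x).add (hx.comp_left y))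

lemma omega_bianchi (P a b c : H →L[ℂ] H) :
    Omega P (a * b - b * a) c + Omega P (b * c - c * b) a + Omega P (c * a - a * c) b
      = ((c * P) * Omega P a b - Omega P a b * (c * P))
        + ((a * P) * Omega P b c - Omega P b c * (a * P))
        + ((b * P) * Omega P c a - Omega P c a * (b * P)) := by
  simp only [omega_eq_mul]
  noncomm_ring

lemma hasSum_cOmega {P x y : H →L[ℂ] H} (h : FiniteRank (Omega P x y)) :
    HasSum (fun k : ℤ => ⟪Omega P x y (e k), e k⟫_ℂ) (cOmega P x y) := by
  obtain ⟨t, ht, -⟩ := exists_hasSum_diag h 1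
  rw [one_mul] at ht
  exact ht.summable.hasSum

lemma hasSum_diag_commutator {T : H →L[ℂ] H} (hT : FiniteRank T) (S : H →L[ℂ] H) :
    HasSum (fun k : ℤ => ⟪(S * T - T * S) (e k), e k⟫_ℂ) 0 := by
  obtain ⟨t, h₁, h₂⟩ := exists_hasSum_diag hT S
  simpa only [sub_apply, inner_sub_left, sub_self] using h₁.sub h₂

/-- For bounded operators `a, b, c` whose commutators with the Hardy projection `P`
have finite rank, `c_Ω = tr Ω` satisfies the Lie-algebra 2-cocycle identity. -/
theorem trOmega_cocycle_identity (P a b c : H →L[ℂ] H)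
    (hP : ∀ (f : H) (k : ℤ), P f k = if 0 < k then f k else 0)
    (ha : FiniteRank (P ∘L a - a ∘L P))
    (hb : FiniteRank (P ∘L b - b ∘L P))
    (hc : FiniteRank (P ∘L c - c ∘L P)) :
    cOmega P (a ∘L b - b ∘L a) c + cOmega P (b ∘L c - c ∘L b) a
      + cOmega P (c ∘L a - a ∘L c) b = 0 := by
  have hPP : P * P = P := by
    ext f k
    simp only [mul_apply_eq_comp, hP]
    split_ifs <;> rfl
  have h₁ := ((hasSum_cOmega (finiteRank_omega hPP (finiteRank_commutator ha hb) hc)).add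
    (hasSum_cOmega (finiteRank_omega hPP (finiteRank_commutator hb hc) ha))).add
    (hasSum_cOmega (finiteRank_omega hPP (finiteRank_commutator hc ha) hb))
  have h₂ := ((hasSum_diag_commutator (finiteRank_omega hPP ha hb) (c * P)).add
    (hasSum_diag_commutator (finiteRank_omega hPP hb hc) (a * P))).add
    (hasSum_diag_commutator (finiteRank_omega hPP hc ha) (b * P))
  simp only [← inner_add_left, ← add_apply] at h₁ h₂
  rw [omega_bianchi] at h₁
  exact (h₁.unique h₂).trans (by simp)
end
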